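/- arXiv:0911.4703 — 2 statements merged into one kernel-verified Lean document; each statement's English description precedes it below -/
import Mathlib

section
/- For every admissible pair (φ,ψ) and every s > 0, the energy admits the completed-square decomposition E(φ,ψ;s) = (1/2)∫_{-m}^ℓ (s δ0 + s ε0/3)(ψ' + k φ)² + (1/2)∫_{-m}^ℓ p ρ0 [(ψ' + k φ) − (g/p) ψ]² + (s/2)∫_{-m}^ℓ ε0 [(φ' − k ψ)² + (ψ' − k φ)²] + ((σ k² − g(ρ0⁺ − ρ0⁻))/2) ψ(0)². -/
open Set MeasureTheory intervalIntegral Filter Topology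

noncomputable section

namespace RT

/-- The piecewise integral `∫_{-m}^0 + ∫_0^ℓ`. -/
def pwInt (m l : ℝ) (f : ℝ → ℝ) : ℝ :=
  (∫ x in (-m)..(0:ℝ), f x) + ∫ x in (0:ℝ)..l, f x

/-- `f` restricted to `[-m,0)` extends continuously to `[-m,0]`, and `f` restricted to
`(0,ℓ]` extends continuously to `[0,ℓ]`. -/
def PiecewiseCont (m l : ℝ) (f : ℝ → ℝ) : Prop :=
  (∃ F : ℝ → ℝ, ContinuousOn F (Icc (-m) 0) ∧ EqOn f F (Ico (-m) 0)) ∧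
  (∃ F : ℝ → ℝ, ContinuousOn F (Icc 0 l) ∧ EqOn f F (Ioc 0 l))

/-- A profile function: the restriction to `[-m,0)` extends continuously to `[-m,0]`, and
the function is continuous on `[0,ℓ]` (hence right-continuous at `0`). -/
def Profile (m l : ℝ) (f : ℝ → ℝ) : Prop :=
  (∃ F : ℝ → ℝ, ContinuousOn F (Icc (-m) 0) ∧ EqOn f F (Ico (-m) 0)) ∧
  ContinuousOn f (Icc 0 l)

/-- The four steady-state profiles `ρ0, p, ε0, δ0` with their positivity assumptions. -/
def ProfilesHyp (m l : ℝ) (ρ0 p ε0 δ0 : ℝ → ℝ) : Prop :=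
  Profile m l ρ0 ∧ Profile m l p ∧ Profile m l ε0 ∧ Profile m l δ0 ∧
  (∀ x ∈ Icc (-m) l, 0 < ρ0 x) ∧ (∀ x ∈ Icc (-m) l, 0 < p x) ∧
  (∀ x ∈ Icc (-m) l, 0 < ε0 x) ∧ (∀ x ∈ Icc (-m) l, 0 ≤ δ0 x)

/-- `f` is continuous on `[-m,ℓ]` and continuously differentiable on `[-m,0]` and on
`[0,ℓ]`, with piecewise derivative `fd`. -/
def PiecewiseC1 (m l : ℝ) (f fd : ℝ → ℝ) : Prop :=
  ContinuousOn f (Icc (-m) l) ∧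
  (∀ x ∈ Ico (-m) 0, HasDerivWithinAt f (fd x) (Icc (-m) 0) x) ∧
  (∀ x ∈ Ioc 0 l, HasDerivWithinAt f (fd x) (Icc 0 l) x) ∧
  PiecewiseCont m l fd

/-- An admissible pair `(φ,ψ)` with piecewise derivatives `(φd,ψd)`. -/
def Admissible (m l : ℝ) (φ ψ φd ψd : ℝ → ℝ) : Prop :=
  PiecewiseC1 m l φ φd ∧ PiecewiseC1 m l ψ ψd ∧
  φ (-m) = 0 ∧ φ l = 0 ∧ ψ (-m) = 0 ∧ ψ l = 0

/-- The energy `E(φ,ψ;s)`. -/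
def energyE (m l g σ k : ℝ) (ρ0 p ε0 δ0 : ℝ → ℝ) (φ ψ φd ψd : ℝ → ℝ) (s : ℝ) : ℝ :=
  σ * k ^ 2 / 2 * (ψ 0) ^ 2
  + (1 / 2) * pwInt m l (fun x =>
      (s * δ0 x + p x * ρ0 x) * (ψd x + k * φ x) ^ 2 - 2 * g * ρ0 x * k * φ x * ψ x)
  + (s / 2) * pwInt m l (fun x =>
      ε0 x * ((φd x - k * ψ x) ^ 2 + (ψd x - k * φ x) ^ 2
        + (1 / 3) * (ψd x + k * φ x) ^ 2))

/-- The normalization functional `J(φ,ψ)`. -/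
def energyJ (m l : ℝ) (ρ0 : ℝ → ℝ) (φ ψ : ℝ → ℝ) : ℝ :=
  (1 / 2) * pwInt m l (fun x => ρ0 x * ((φ x) ^ 2 + (ψ x) ^ 2))

/-- The viscous part `E1(φ,ψ)` of the energy. -/
def energyE1 (m l k : ℝ) (ε0 δ0 : ℝ → ℝ) (φ ψ φd ψd : ℝ → ℝ) : ℝ :=
  (1 / 2) * pwInt m l (fun x => (δ0 x + ε0 x / 3) * (ψd x + k * φ x) ^ 2)
  + (1 / 2) * pwInt m l (fun x =>
      ε0 x * ((φd x - k * ψ x) ^ 2 + (ψd x - k * φ x) ^ 2))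

/-- `μ(s)`: the infimum of `E(·,·;s)` over admissible pairs with `J = 1`. -/
def muInf (m l g σ k : ℝ) (ρ0 p ε0 δ0 : ℝ → ℝ) (s : ℝ) : ℝ :=
  sInf { e : ℝ | ∃ φ ψ φd ψd : ℝ → ℝ, Admissible m l φ ψ φd ψd ∧
    energyJ m l ρ0 φ ψ = 1 ∧ e = energyE m l g σ k ρ0 p ε0 δ0 φ ψ φd ψd s }

/-- The hydrostatic steady-state relation `ρ0' = -g ρ0 / p` on each piece. -/
def Hydrostatic (m l g : ℝ) (ρ0 p : ℝ → ℝ) : Prop :=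
  (∀ x ∈ Ico (-m) 0, HasDerivWithinAt ρ0 (-g * ρ0 x / p x) (Ico (-m) 0) x) ∧
  (∀ x ∈ Ioc 0 l, HasDerivWithinAt ρ0 (-g * ρ0 x / p x) (Ioc 0 l) x)

end RT

namespace RT

/-! In the inviscid part of the energy write `w = ψ' + kφ`. Since `ρ₀' = -gρ₀/p`, one has
`pρ₀w² - 2gρ₀kφψ = pρ₀(w - (g/p)ψ)² + g(ρ₀ψ²)'`, and integrating the total derivative over the
two layers leaves, besides the values at `-m` and `ℓ`, the jump `-g(ρ₀⁺ - ρ₀⁻)ψ(0)²` at the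
interface. As `p` may tend to `0` at `0⁻`, the integrability of `gρ₀/p` is not a matter of
boundedness: it holds because `-gρ₀` has the nonnegative derivative `g²ρ₀/p` and finite one-sided
limits. -/

/-- Integrability on each of the two layers, which is what makes `pwInt` additive. -/
def PwIntegrable (m l : ℝ) (f : ℝ → ℝ) : Prop :=
  IntervalIntegrable f volume (-m) 0 ∧ IntervalIntegrable f volume 0 l

section PiecewiseIntegral

variable {m l : ℝ} {f h : ℝ → ℝ}

namespace PwIntegrable

theorem add (hf : PwIntegrable m l f) (hh : PwIntegrable m l h) :
    PwIntegrable m l (fun x => f x + h x) :=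
  ⟨hf.1.add hh.1, hf.2.add hh.2⟩

theorem const_mul (c : ℝ) (hf : PwIntegrable m l f) : PwIntegrable m l (fun x => c * f x) :=
  ⟨hf.1.const_mul c, hf.2.const_mul c⟩

theorem congr (hm : 0 ≤ m) (hl : 0 ≤ l) (hf : PwIntegrable m l f)
    (hfh : EqOn f h (Ioo (-m) 0 ∪ Ioo 0 l)) : PwIntegrable m l h := by
  refine ⟨hf.1.congr_uIoo ?_, hf.2.congr_uIoo ?_⟩
  · rw [uIoo_of_le (neg_nonpos.2 hm)]
    exact hfh.mono subset_union_left
  · rw [uIoo_of_le hl]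
    exact hfh.mono subset_union_right

theorem mul_continuousOn (hm : 0 ≤ m) (hl : 0 ≤ l) (hf : PwIntegrable m l f)
    (hh : ContinuousOn h (Icc (-m) l)) : PwIntegrable m l (fun x => f x * h x) := by
  refine ⟨hf.1.mul_continuousOn (hh.mono ?_), hf.2.mul_continuousOn (hh.mono ?_)⟩
  · rw [uIcc_of_le (neg_nonpos.2 hm)]
    exact Icc_subset_Icc_right hl
  · rw [uIcc_of_le hl]
    exact Icc_subset_Icc_left (neg_nonpos.2 hm)

end PwIntegrable

theorem pwInt_add (hf : PwIntegrable m l f) (hh : PwIntegrable m l h) :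
    pwInt m l (fun x => f x + h x) = pwInt m l f + pwInt m l h := by
  simp only [pwInt, intervalIntegral.integral_add hf.1 hh.1,
    intervalIntegral.integral_add hf.2 hh.2]
  ring

theorem pwInt_const_mul (c : ℝ) (f : ℝ → ℝ) :
    pwInt m l (fun x => c * f x) = c * pwInt m l f := by
  simp only [pwInt, intervalIntegral.integral_const_mul, mul_add]

theorem pwInt_congr (hm : 0 ≤ m) (hl : 0 ≤ l) (hfh : EqOn f h (Ioo (-m) 0 ∪ Ioo 0 l)) :
    pwInt m l f = pwInt m l h :=
  congrArg₂ (· + ·)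
    (integral_congr_Ioo_of_le (neg_nonpos.2 hm) fun _ hx => hfh (.inl hx))
    (integral_congr_Ioo_of_le hl fun _ hx => hfh (.inr hx))

theorem pwInt_eq_sub_sub_jump_of_hasDerivAt {f f' : ℝ → ℝ} {fa fminus fplus fb : ℝ}
    (hm : 0 < m) (hl : 0 < l) (hderiv : ∀ x ∈ Ioo (-m) 0 ∪ Ioo 0 l, HasDerivAt f (f' x) x)
    (hint : PwIntegrable m l f') (ha : Tendsto f (𝓝[>] (-m)) (𝓝 fa))
    (hminus : Tendsto f (𝓝[<] 0) (𝓝 fminus)) (hplus : Tendsto f (𝓝[>] 0) (𝓝 fplus))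
    (hb : Tendsto f (𝓝[<] l) (𝓝 fb)) :
    pwInt m l f' = fb - fa - (fplus - fminus) := by
  rw [pwInt,
    integral_eq_sub_of_hasDerivAt_of_tendsto (neg_lt_zero.2 hm) (fun x hx => hderiv x (.inl hx))
      hint.1 ha hminus,
    integral_eq_sub_of_hasDerivAt_of_tendsto hl (fun x hx => hderiv x (.inr hx))
      hint.2 hplus hb]
  ring

end PiecewiseIntegral

section PiecewiseContinuity

attribute [fun_prop] PiecewiseCont

variable {m l : ℝ} {f h : ℝ → ℝ}

namespace PiecewiseCont

theorem of_continuousOn (hm : 0 ≤ m) (hl : 0 ≤ l) (hf : ContinuousOn f (Icc (-m) l)) :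
    PiecewiseCont m l f :=
  ⟨⟨f, hf.mono (Icc_subset_Icc_right hl), fun _ _ => rfl⟩,
    ⟨f, hf.mono (Icc_subset_Icc_left (neg_nonpos.2 hm)), fun _ _ => rfl⟩⟩

theorem of_continuousOn_of_tendsto {fminus fplus : ℝ} (hleft : ContinuousOn f (Ico (-m) 0))
    (hright : ContinuousOn f (Ioc 0 l)) (hminus : Tendsto f (𝓝[<] 0) (𝓝 fminus))
    (hplus : Tendsto f (𝓝[>] 0) (𝓝 fplus)) : PiecewiseCont m l f := by
  refine ⟨⟨Function.update f 0 fminus, ?_, fun x hx => ?_⟩,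
    ⟨Function.update f 0 fplus, ?_, fun x hx => ?_⟩⟩
  · rw [continuousOn_update_iff, Icc_sdiff_right]
    exact ⟨hleft, fun _ => hminus.mono_left (nhdsWithin_mono _ Ico_subset_Iio_self)⟩
  · rw [Function.update_of_ne hx.2.ne]
  · rw [continuousOn_update_iff, Icc_sdiff_left]
    exact ⟨hright, fun _ => hplus.mono_left (nhdsWithin_mono _ Ioc_subset_Ioi_self)⟩
  · rw [Function.update_of_ne hx.1.ne']

theorem map₂ {op : ℝ → ℝ → ℝ} (hop : Continuous (Function.uncurry op))
    (hf : PiecewiseCont m l f) (hh : PiecewiseCont m l h) :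
    PiecewiseCont m l (fun x => op (f x) (h x)) := by
  obtain ⟨⟨F, hF, hfF⟩, G, hG, hfG⟩ := hf
  obtain ⟨⟨F', hF', hhF'⟩, G', hG', hhG'⟩ := hh
  exact ⟨⟨fun x => op (F x) (F' x), hop.comp_continuousOn (hF.prodMk hF'),
      fun x hx => congrArg₂ op (hfF hx) (hhF' hx)⟩,
    ⟨fun x => op (G x) (G' x), hop.comp_continuousOn (hG.prodMk hG'),
      fun x hx => congrArg₂ op (hfG hx) (hhG' hx)⟩⟩

theorem map {op : ℝ → ℝ} (hop : Continuous op) (hf : PiecewiseCont m l f) :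
    PiecewiseCont m l (fun x => op (f x)) :=
  map₂ (op := fun y _ => op y) (hop.comp continuous_fst) hf hf

@[fun_prop]
theorem const (c : ℝ) : PiecewiseCont m l (fun _ => c) :=
  ⟨⟨fun _ => c, continuousOn_const, fun _ _ => rfl⟩,
    ⟨fun _ => c, continuousOn_const, fun _ _ => rfl⟩⟩

@[fun_prop]
theorem add (hf : PiecewiseCont m l f) (hh : PiecewiseCont m l h) :
    PiecewiseCont m l (fun x => f x + h x) :=
  map₂ continuous_add hf hh

@[fun_prop]
theorem sub (hf : PiecewiseCont m l f) (hh : PiecewiseCont m l h) :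
    PiecewiseCont m l (fun x => f x - h x) :=
  map₂ continuous_sub hf hh

@[fun_prop]
theorem mul (hf : PiecewiseCont m l f) (hh : PiecewiseCont m l h) :
    PiecewiseCont m l (fun x => f x * h x) :=
  map₂ continuous_mul hf hh

@[fun_prop]
theorem pow (hf : PiecewiseCont m l f) (n : ℕ) : PiecewiseCont m l (fun x => f x ^ n) :=
  hf.map (continuous_pow n)

@[fun_prop]
theorem div_const (hf : PiecewiseCont m l f) (c : ℝ) : PiecewiseCont m l (fun x => f x / c) :=
  hf.map (continuous_id.div_const c)

theorem pwIntegrable (hm : 0 ≤ m) (hl : 0 ≤ l) (hf : PiecewiseCont m l f) :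
    PwIntegrable m l f := by
  obtain ⟨⟨F, hF, hfF⟩, G, hG, hfG⟩ := hf
  constructor
  · refine (hF.intervalIntegrable_of_Icc (neg_nonpos.2 hm)).congr_uIoo ?_
    rw [uIoo_of_le (neg_nonpos.2 hm)]
    exact (hfF.mono Ioo_subset_Ico_self).symm
  · refine (hG.intervalIntegrable_of_Icc hl).congr_uIoo ?_
    rw [uIoo_of_le hl]
    exact (hfG.mono Ioo_subset_Ioc_self).symm

end PiecewiseCont

theorem Profile.piecewiseCont (hf : Profile m l f) : PiecewiseCont m l f :=
  ⟨hf.1, f, hf.2, fun _ _ => rfl⟩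

theorem intervalIntegrable_deriv_of_nonneg_of_eqOn {a b : ℝ} {f f' F : ℝ → ℝ} (hab : a ≤ b)
    (hF : ContinuousOn F (Icc a b)) (hfF : EqOn f F (Ioo a b))
    (hderiv : ∀ x ∈ Ioo a b, HasDerivAt f (f' x) x) (hnonneg : ∀ x ∈ Ioo a b, 0 ≤ f' x) :
    IntervalIntegrable f' volume a b := by
  refine intervalIntegrable_deriv_of_nonneg (g := F) ?_ ?_ ?_
  · rwa [uIcc_of_le hab]
  · rw [min_eq_left hab, max_eq_right hab]
    intro x hx
    exact (hderiv x hx).congr_of_eventuallyEq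
      (hfF.symm.eventuallyEq_of_mem (Ioo_mem_nhds hx.1 hx.2))
  · rwa [min_eq_left hab, max_eq_right hab]

theorem PiecewiseCont.pwIntegrable_deriv_of_nonneg {f' : ℝ → ℝ} (hm : 0 ≤ m) (hl : 0 ≤ l)
    (hf : PiecewiseCont m l f) (hderiv : ∀ x ∈ Ioo (-m) 0 ∪ Ioo 0 l, HasDerivAt f (f' x) x)
    (hnonneg : ∀ x ∈ Ioo (-m) 0 ∪ Ioo 0 l, 0 ≤ f' x) : PwIntegrable m l f' := by
  obtain ⟨⟨F, hF, hfF⟩, G, hG, hfG⟩ := hf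
  exact ⟨intervalIntegrable_deriv_of_nonneg_of_eqOn (neg_nonpos.2 hm) hF
      (hfF.mono Ioo_subset_Ico_self) (fun x hx => hderiv x (.inl hx))
      (fun x hx => hnonneg x (.inl hx)),
    intervalIntegrable_deriv_of_nonneg_of_eqOn hl hG
      (hfG.mono Ioo_subset_Ioc_self) (fun x hx => hderiv x (.inr hx))
      (fun x hx => hnonneg x (.inr hx))⟩

namespace PiecewiseC1

variable {f' : ℝ → ℝ}

theorem piecewiseCont (hm : 0 ≤ m) (hl : 0 ≤ l) (hf : PiecewiseC1 m l f f') :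
    PiecewiseCont m l f :=
  .of_continuousOn hm hl hf.1

theorem piecewiseCont_deriv (hf : PiecewiseC1 m l f f') : PiecewiseCont m l f' :=
  hf.2.2.2

theorem hasDerivAt (hf : PiecewiseC1 m l f f') :
    ∀ x ∈ Ioo (-m) 0 ∪ Ioo 0 l, HasDerivAt f (f' x) x := by
  rintro x (hx | hx)
  · exact (hf.2.1 x (Ioo_subset_Ico_self hx)).hasDerivAt (Icc_mem_nhds hx.1 hx.2)
  · exact (hf.2.2.1 x (Ioo_subset_Ioc_self hx)).hasDerivAt (Icc_mem_nhds hx.1 hx.2)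

end PiecewiseC1

end PiecewiseContinuity

section Hydrostatic

variable {m l g ρminus ρplus : ℝ} {ρ0 p : ℝ → ℝ}

namespace Hydrostatic

theorem hasDerivAt (hhydro : Hydrostatic m l g ρ0 p) :
    ∀ x ∈ Ioo (-m) 0 ∪ Ioo 0 l, HasDerivAt ρ0 (-g * ρ0 x / p x) x := by
  rintro x (hx | hx)
  · exact (hhydro.1 x (Ioo_subset_Ico_self hx)).hasDerivAt (Ico_mem_nhds hx.1 hx.2)
  · exact (hhydro.2 x (Ioo_subset_Ioc_self hx)).hasDerivAt (Ioc_mem_nhds hx.1 hx.2)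

theorem piecewiseCont (hhydro : Hydrostatic m l g ρ0 p)
    (hρminus : Tendsto ρ0 (𝓝[<] 0) (𝓝 ρminus)) (hρplus : Tendsto ρ0 (𝓝[>] 0) (𝓝 ρplus)) :
    PiecewiseCont m l ρ0 :=
  .of_continuousOn_of_tendsto (fun x hx => (hhydro.1 x hx).continuousWithinAt)
    (fun x hx => (hhydro.2 x hx).continuousWithinAt) hρminus hρplus

theorem tendsto_bottom (hm : 0 < m) (hhydro : Hydrostatic m l g ρ0 p) :
    Tendsto ρ0 (𝓝[>] (-m)) (𝓝 (ρ0 (-m))) :=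
  have hm' : -m < 0 := neg_lt_zero.2 hm
  (hhydro.1 (-m) (left_mem_Ico.2 hm')).continuousWithinAt.mono_of_mem_nhdsWithin
    (Ico_mem_nhdsGT hm')

theorem tendsto_top (hl : 0 < l) (hhydro : Hydrostatic m l g ρ0 p) :
    Tendsto ρ0 (𝓝[<] l) (𝓝 (ρ0 l)) :=
  (hhydro.2 l (right_mem_Ioc.2 hl)).continuousWithinAt.mono_of_mem_nhdsWithin
    (Ioc_mem_nhdsLT hl)

theorem pwIntegrable_density_div_pressure (hm : 0 ≤ m) (hl : 0 ≤ l)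
    (hhydro : Hydrostatic m l g ρ0 p) (hρ : PiecewiseCont m l ρ0)
    (hρ_nonneg : ∀ x ∈ Ioo (-m) 0 ∪ Ioo 0 l, 0 ≤ ρ0 x)
    (hp_nonneg : ∀ x ∈ Ioo (-m) 0 ∪ Ioo 0 l, 0 ≤ p x) :
    PwIntegrable m l (fun x => g * ρ0 x / p x) := by
  have hsq : PwIntegrable m l (fun x => g ^ 2 * (ρ0 x / p x)) := by
    refine PiecewiseCont.pwIntegrable_deriv_of_nonneg (f := fun x => -g * ρ0 x) hm hl
      (by fun_prop) (fun x hx => ?_)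
      (fun x hx => mul_nonneg (sq_nonneg g) (div_nonneg (hρ_nonneg x hx) (hp_nonneg x hx)))
    exact ((hhydro.hasDerivAt x hx).const_mul (-g)).congr_deriv (by ring)
  refine (hsq.const_mul g⁻¹).congr hm hl fun x _ => ?_
  rcases eq_or_ne g 0 with rfl | hg
  · simp
  · field_simp

end Hydrostatic

end Hydrostatic

section CompletedSquare

variable {m l g k ρminus ρplus : ℝ} {ρ0 p ε0 δ0 φ ψ φd ψd : ℝ → ℝ}

theorem pwIntegrable_deriv_density_mul_sq (hm : 0 ≤ m) (hl : 0 ≤ l)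
    (hρ : PiecewiseCont m l ρ0) (hquot : PwIntegrable m l (fun x => g * ρ0 x / p x))
    (hψ : PiecewiseC1 m l ψ ψd) :
    PwIntegrable m l (fun x => -g * ρ0 x / p x * ψ x ^ 2 + ρ0 x * (2 * ψ x * ψd x)) := by
  have hψ_cont := hψ.piecewiseCont hm hl
  have hψd_cont := hψ.piecewiseCont_deriv
  have hprod : PiecewiseCont m l (fun x => ρ0 x * (2 * ψ x * ψd x)) := by fun_prop
  refine (((hquot.mul_continuousOn hm hl (hψ.1.pow 2)).const_mul (-1)).add
    (hprod.pwIntegrable hm hl)).congr hm hl fun x _ => ?_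
  simp only [Pi.pow_apply]
  ring

theorem pwInt_deriv_density_mul_sq (hm : 0 < m) (hl : 0 < l)
    (hhydro : Hydrostatic m l g ρ0 p) (hρminus : Tendsto ρ0 (𝓝[<] 0) (𝓝 ρminus))
    (hρplus : Tendsto ρ0 (𝓝[>] 0) (𝓝 ρplus)) (hψ : PiecewiseC1 m l ψ ψd)
    (hint : PwIntegrable m l
      (fun x => -g * ρ0 x / p x * ψ x ^ 2 + ρ0 x * (2 * ψ x * ψd x))) :
    pwInt m l (fun x => -g * ρ0 x / p x * ψ x ^ 2 + ρ0 x * (2 * ψ x * ψd x))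
      = ρ0 l * ψ l ^ 2 - ρ0 (-m) * ψ (-m) ^ 2 - (ρplus - ρminus) * ψ 0 ^ 2 := by
  have hml : -m < l := by linarith
  have hψ_zero : Tendsto ψ (𝓝 0) (𝓝 (ψ 0)) :=
    hψ.1.continuousAt (Icc_mem_nhds (neg_lt_zero.2 hm) hl)
  have hψ_bottom : Tendsto ψ (𝓝[>] (-m)) (𝓝 (ψ (-m))) :=
    (hψ.1 (-m) (left_mem_Icc.2 hml.le)).mono_of_mem_nhdsWithin (Icc_mem_nhdsGT hml)
  have hψ_top : Tendsto ψ (𝓝[<] l) (𝓝 (ψ l)) :=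
    (hψ.1 l (right_mem_Icc.2 hml.le)).mono_of_mem_nhdsWithin (Icc_mem_nhdsLT hml)
  rw [sub_mul]
  refine pwInt_eq_sub_sub_jump_of_hasDerivAt (f := fun x => ρ0 x * ψ x ^ 2) hm hl
    (fun x hx => ?_) hint ((hhydro.tendsto_bottom hm).mul (hψ_bottom.pow 2))
    (hρminus.mul ((hψ_zero.mono_left nhdsWithin_le_nhds).pow 2))
    (hρplus.mul ((hψ_zero.mono_left nhdsWithin_le_nhds).pow 2))
    ((hhydro.tendsto_top hl).mul (hψ_top.pow 2))
  exact ((hhydro.hasDerivAt x hx).mul ((hψ.hasDerivAt x hx).pow 2)).congr_deriv (by simp)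

theorem pressure_sub_gravity_eq_sq_add_deriv {𝕜 : Type*} [Field 𝕜]
    {g k P ρ a b b' : 𝕜} (hP : P ≠ 0) :
    P * ρ * (b' + k * a) ^ 2 - 2 * g * ρ * k * a * b
      = P * ρ * ((b' + k * a) - g / P * b) ^ 2
        + g * (-g * ρ / P * b ^ 2 + ρ * (2 * b * b')) := by
  field_simp
  ring

theorem pwInt_pressure_sub_gravity (hm : 0 < m) (hl : 0 < l)
    (hp : PiecewiseCont m l p) (hρ_nonneg : ∀ x ∈ Ioo (-m) 0 ∪ Ioo 0 l, 0 ≤ ρ0 x)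
    (hp_pos : ∀ x ∈ Ioo (-m) 0 ∪ Ioo 0 l, 0 < p x) (hhydro : Hydrostatic m l g ρ0 p)
    (hρminus : Tendsto ρ0 (𝓝[<] 0) (𝓝 ρminus)) (hρplus : Tendsto ρ0 (𝓝[>] 0) (𝓝 ρplus))
    (hφ : PiecewiseCont m l φ) (hψ : PiecewiseC1 m l ψ ψd) :
    pwInt m l (fun x => p x * ρ0 x * (ψd x + k * φ x) ^ 2 - 2 * g * ρ0 x * k * φ x * ψ x)
      = pwInt m l (fun x => p x * ρ0 x * ((ψd x + k * φ x) - g / p x * ψ x) ^ 2)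
        + g * (ρ0 l * ψ l ^ 2 - ρ0 (-m) * ψ (-m) ^ 2 - (ρplus - ρminus) * ψ 0 ^ 2) := by
  have hρ := hhydro.piecewiseCont hρminus hρplus
  have hψ_cont := hψ.piecewiseCont hm.le hl.le
  have hψd_cont := hψ.piecewiseCont_deriv
  have hderiv := pwIntegrable_deriv_density_mul_sq hm.le hl.le hρ
    (hhydro.pwIntegrable_density_div_pressure hm.le hl.le hρ hρ_nonneg
      fun x hx => (hp_pos x hx).le) hψ
  have hexpanded : PwIntegrable m l (fun x =>
      p x * ρ0 x * (ψd x + k * φ x) ^ 2 - 2 * g * ρ0 x * k * φ x * ψ x) :=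
    PiecewiseCont.pwIntegrable hm.le hl.le (by fun_prop)
  have hsquare : PwIntegrable m l (fun x =>
      p x * ρ0 x * ((ψd x + k * φ x) - g / p x * ψ x) ^ 2) :=
    (hexpanded.add (hderiv.const_mul (-g))).congr hm.le hl.le fun x hx => by
      linear_combination pressure_sub_gravity_eq_sq_add_deriv (g := g) (k := k) (ρ := ρ0 x)
        (a := φ x) (b := ψ x) (b' := ψd x) (hp_pos x hx).ne'
  rw [← pwInt_deriv_density_mul_sq hm hl hhydro hρminus hρplus hψ hderiv, ← pwInt_const_mul,
    ← pwInt_add hsquare (hderiv.const_mul g)]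
  exact pwInt_congr hm.le hl.le fun x hx =>
    pressure_sub_gravity_eq_sq_add_deriv (hp_pos x hx).ne'

theorem pwInt_viscous_regroup (s : ℝ) (hm : 0 ≤ m) (hl : 0 ≤ l) {δ ε w q : ℝ → ℝ}
    (hδ : PiecewiseCont m l δ) (hε : PiecewiseCont m l ε) (hw : PiecewiseCont m l w)
    (hq : PiecewiseCont m l q) :
    pwInt m l (fun x => s * δ x * w x ^ 2)
        + s * pwInt m l (fun x => ε x * (q x + (1 / 3) * w x ^ 2))
      = pwInt m l (fun x => (s * δ x + s * ε x / 3) * w x ^ 2)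
        + s * pwInt m l (fun x => ε x * q x) := by
  have hbulk : PwIntegrable m l (fun x => s * δ x * w x ^ 2) :=
    PiecewiseCont.pwIntegrable hm hl (by fun_prop)
  have hstress : PwIntegrable m l (fun x => ε x * (q x + (1 / 3) * w x ^ 2)) :=
    PiecewiseCont.pwIntegrable hm hl (by fun_prop)
  have hdivergence : PwIntegrable m l (fun x => (s * δ x + s * ε x / 3) * w x ^ 2) :=
    PiecewiseCont.pwIntegrable hm hl (by fun_prop)
  have hshear : PwIntegrable m l (fun x => ε x * q x) :=
    PiecewiseCont.pwIntegrable hm hl (by fun_prop)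
  rw [← pwInt_const_mul, ← pwInt_const_mul, ← pwInt_add hbulk (hstress.const_mul s),
    ← pwInt_add hdivergence (hshear.const_mul s)]
  exact pwInt_congr hm hl fun x _ => by ring

theorem energy_completed_square_general (g σ k s : ℝ) (hm : 0 < m) (hl : 0 < l)
    (hp : PiecewiseCont m l p) (hε : PiecewiseCont m l ε0) (hδ : PiecewiseCont m l δ0)
    (hρ_nonneg : ∀ x ∈ Ioo (-m) 0 ∪ Ioo 0 l, 0 ≤ ρ0 x)
    (hp_pos : ∀ x ∈ Ioo (-m) 0 ∪ Ioo 0 l, 0 < p x) (hhydro : Hydrostatic m l g ρ0 p)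
    (hρminus : Tendsto ρ0 (𝓝[<] 0) (𝓝 ρminus)) (hρplus : Tendsto ρ0 (𝓝[>] 0) (𝓝 ρplus))
    (hφ : PiecewiseC1 m l φ φd) (hψ : PiecewiseC1 m l ψ ψd) :
    energyE m l g σ k ρ0 p ε0 δ0 φ ψ φd ψd s
      = (1 / 2) * pwInt m l (fun x => (s * δ0 x + s * ε0 x / 3) * (ψd x + k * φ x) ^ 2)
        + (1 / 2) * pwInt m l (fun x =>
            p x * ρ0 x * ((ψd x + k * φ x) - g / p x * ψ x) ^ 2)
        + (s / 2) * pwInt m l (fun x =>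
            ε0 x * ((φd x - k * ψ x) ^ 2 + (ψd x - k * φ x) ^ 2))
        + (σ * k ^ 2 - g * (ρplus - ρminus)) / 2 * (ψ 0) ^ 2
        + g / 2 * (ρ0 l * ψ l ^ 2 - ρ0 (-m) * ψ (-m) ^ 2) := by
  have hρ := hhydro.piecewiseCont hρminus hρplus
  have hφ_cont := hφ.piecewiseCont hm.le hl.le
  have hφd_cont := hφ.piecewiseCont_deriv
  have hψ_cont := hψ.piecewiseCont hm.le hl.le
  have hψd_cont := hψ.piecewiseCont_deriv
  have hsplit : pwInt m l (fun x =>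
        (s * δ0 x + p x * ρ0 x) * (ψd x + k * φ x) ^ 2 - 2 * g * ρ0 x * k * φ x * ψ x)
      = pwInt m l (fun x => s * δ0 x * (ψd x + k * φ x) ^ 2)
        + pwInt m l (fun x =>
            p x * ρ0 x * (ψd x + k * φ x) ^ 2 - 2 * g * ρ0 x * k * φ x * ψ x) := by
    rw [← pwInt_add (PiecewiseCont.pwIntegrable hm.le hl.le (by fun_prop))
      (PiecewiseCont.pwIntegrable hm.le hl.le (by fun_prop))]
    exact pwInt_congr hm.le hl.le fun x _ => by ring
  have hviscous := pwInt_viscous_regroup s hm.le hl.le (w := fun x => ψd x + k * φ x)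
    (q := fun x => (φd x - k * ψ x) ^ 2 + (ψd x - k * φ x) ^ 2) hδ hε (by fun_prop) (by fun_prop)
  have hpressure := pwInt_pressure_sub_gravity (k := k) hm hl hp hρ_nonneg hp_pos hhydro
    hρminus hρplus hφ_cont hψ
  rw [energyE]
  linear_combination (1 / 2) * hsplit + (1 / 2) * hviscous + (1 / 2) * hpressure

end CompletedSquare

/-- The completed-square decomposition of the energy `E(φ,ψ;s)`, where `ρ0⁺ = ρ0 0` and
`ρ0⁻` is the left limit of `ρ0` at `0`. -/
theorem energy_completed_square (m l g σ k s : ℝ) (ρ0 p ε0 δ0 φ ψ φd ψd : ℝ → ℝ)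
    (ρ0minus : ℝ)
    (hm : 0 < m) (hl : 0 < l) (hg : 0 < g) (hσ : 0 ≤ σ) (hk : 0 < k) (hs : 0 < s)
    (hprof : ProfilesHyp m l ρ0 p ε0 δ0)
    (hhydro : Hydrostatic m l g ρ0 p)
    (hρm : Tendsto ρ0 (𝓝[<] 0) (𝓝 ρ0minus))
    (hadm : Admissible m l φ ψ φd ψd) :
    energyE m l g σ k ρ0 p ε0 δ0 φ ψ φd ψd s
      = (1 / 2) * pwInt m l (fun x => (s * δ0 x + s * ε0 x / 3) * (ψd x + k * φ x) ^ 2)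
        + (1 / 2) * pwInt m l (fun x =>
            p x * ρ0 x * ((ψd x + k * φ x) - g / p x * ψ x) ^ 2)
        + (s / 2) * pwInt m l (fun x =>
            ε0 x * ((φd x - k * ψ x) ^ 2 + (ψd x - k * φ x) ^ 2))
        + (σ * k ^ 2 - g * (ρ0 0 - ρ0minus)) / 2 * (ψ 0) ^ 2 := by
  obtain ⟨hρ, hp, hε, hδ, hρ_pos, hp_pos, -, -⟩ := hprof
  obtain ⟨hφ, hψ, -, -, hψ_bottom, hψ_top⟩ := hadm
  have hρplus : Tendsto ρ0 (𝓝[>] 0) (𝓝 (ρ0 0)) :=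
    (hρ.2 0 (left_mem_Icc.2 hl.le)).mono_of_mem_nhdsWithin (Icc_mem_nhdsGT hl)
  have hlayers : Ioo (-m) 0 ∪ Ioo 0 l ⊆ Icc (-m) l :=
    union_subset (Ioo_subset_Icc_self.trans (Icc_subset_Icc_right hl.le))
      (Ioo_subset_Icc_self.trans (Icc_subset_Icc_left (neg_nonpos.2 hm.le)))
  rw [energy_completed_square_general g σ k s hm hl hp.piecewiseCont hε.piecewiseCont
    hδ.piecewiseCont (fun x hx => (hρ_pos x (hlayers hx)).le) (fun x hx => hp_pos x (hlayers hx))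
    hhydro hρm hρplus hφ hψ, hψ_bottom, hψ_top]
  ring

end RT
end
end

section
/- If an admissible pair (φ,ψ) and some s > 0 satisfy E(φ,ψ;s) < 0, then ψ(0) ≠ 0 and σ k² < g(ρ0⁺ − ρ0⁻). -/
open Set MeasureTheory intervalIntegral Filter Topology

noncomputable section

namespace RT

/-!
Set `w = ψ' + kφ`. The hydrostatic relation `ρ0' = -gρ0/p` is what makes the square complete:
on each layer
`(sδ0 + pρ0) w² - 2gρ0kφψ = (gρ0ψ²)' + sδ0 w² + pρ0 (w - gψ/p)²`.
Since `ψ` vanishes at both ends, integrating the total derivative over the two layers leaves only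
the jump of `ρ0` at the interface, so `E ≥ ½ (σk² - g(ρ0⁺ - ρ0⁻)) ψ(0)²`.
-/

section OneSidedLimits

variable {a b : ℝ} {f : ℝ → ℝ}

lemma tendsto_nhdsGT_of_continuousOn_Icc (hab : a < b) (hf : ContinuousOn f (Icc a b)) :
    Tendsto f (𝓝[>] a) (𝓝 (f a)) :=
  (continuousWithinAt_Ioo_iff_Ioi hab).1 ((hf a (left_mem_Icc.2 hab.le)).mono Ioo_subset_Icc_self)

lemma tendsto_nhdsLT_of_continuousOn_Icc (hab : a < b) (hf : ContinuousOn f (Icc a b)) :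
    Tendsto f (𝓝[<] b) (𝓝 (f b)) :=
  (continuousWithinAt_Ioo_iff_Iio hab).1 ((hf b (right_mem_Icc.2 hab.le)).mono Ioo_subset_Icc_self)

lemma sub_le_integral_of_hasDerivAt_le_of_tendsto {f' h : ℝ → ℝ} {fa fb : ℝ} (hab : a < b)
    (hderiv : ∀ x ∈ Ioo a b, HasDerivAt f (f' x) x) (hle : ∀ x ∈ Ioo a b, f' x ≤ h x)
    (hint : IntervalIntegrable h volume a b)
    (ha : Tendsto f (𝓝[>] a) (𝓝 fa)) (hb : Tendsto f (𝓝[<] b) (𝓝 fb)) :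
    fb - fa ≤ ∫ x in a..b, h x := by
  have hf : ContinuousOn f (Ioo a b) := fun x hx =>
    (hderiv x hx).continuousAt.continuousWithinAt
  have hcont : ContinuousOn (extendFrom (Ioo a b) f) (Icc a b) :=
    continuousOn_Icc_extendFrom_Ioo hf ha hb
  have hext : EqOn (extendFrom (Ioo a b) f) f (Ioo a b) := extendFrom_extends hf
  rw [← eq_lim_at_left_extendFrom_Ioo hab ha, ← eq_lim_at_right_extendFrom_Ioo hab hb]
  refine sub_le_integral_of_hasDeriv_right_of_le hab.le hcont (fun x hx => ?_)
    ((intervalIntegrable_iff_integrableOn_Icc_of_le hab.le).1 hint) hle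
  exact ((hderiv x hx).congr_of_eventuallyEq
    (hext.eventuallyEq_of_mem (isOpen_Ioo.mem_nhds hx))).hasDerivWithinAt

end OneSidedLimits

/-- `f` agrees on `(a, b)` with a function continuous on `[a, b]`. This is what `Profile` and
`PiecewiseCont` say on each layer; the values of `f` at `a` and `b` are not constrained. -/
def ExtendsContinuously (a b : ℝ) (f : ℝ → ℝ) : Prop :=
  ∃ F : ℝ → ℝ, ContinuousOn F (Icc a b) ∧ EqOn f F (Ioo a b)

namespace ExtendsContinuously

variable {a b : ℝ} {f : ℝ → ℝ}

lemma const_mul (c : ℝ) (hf : ExtendsContinuously a b f) :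
    ExtendsContinuously a b (fun x => c * f x) := by
  obtain ⟨F, hF, hfF⟩ := hf
  exact ⟨fun x => c * F x, hF.const_mul c, fun x hx => congrArg (c * ·) (hfF hx)⟩

lemma intervalIntegrable (hab : a ≤ b) (hf : ExtendsContinuously a b f) :
    IntervalIntegrable f volume a b := by
  obtain ⟨F, hF, hfF⟩ := hf
  refine (hF.intervalIntegrable_of_Icc hab).congr_uIoo ?_
  rw [uIoo_of_le hab]
  exact hfF.symm

end ExtendsContinuously

section Layers

variable {m l : ℝ} {f fd : ℝ → ℝ}

lemma Profile.extendsContinuously_left (hf : Profile m l f) : ExtendsContinuously (-m) 0 f :=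
  hf.1.imp fun _ hF => ⟨hF.1, hF.2.mono Ioo_subset_Ico_self⟩

lemma Profile.extendsContinuously_right (hf : Profile m l f) : ExtendsContinuously 0 l f :=
  ⟨f, hf.2, eqOn_refl f _⟩

lemma PiecewiseCont.extendsContinuously_left (hf : PiecewiseCont m l f) :
    ExtendsContinuously (-m) 0 f :=
  hf.1.imp fun _ hF => ⟨hF.1, hF.2.mono Ioo_subset_Ico_self⟩

lemma PiecewiseCont.extendsContinuously_right (hf : PiecewiseCont m l f) :
    ExtendsContinuously 0 l f :=
  hf.2.imp fun _ hF => ⟨hF.1, hF.2.mono Ioo_subset_Ioc_self⟩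

lemma PiecewiseC1.hasDerivAt_left (hf : PiecewiseC1 m l f fd) {x : ℝ} (hx : x ∈ Ioo (-m) 0) :
    HasDerivAt f (fd x) x :=
  (hf.2.1 x (Ioo_subset_Ico_self hx)).hasDerivAt (Icc_mem_nhds hx.1 hx.2)

lemma PiecewiseC1.hasDerivAt_right (hf : PiecewiseC1 m l f fd) {x : ℝ} (hx : x ∈ Ioo 0 l) :
    HasDerivAt f (fd x) x :=
  (hf.2.2.1 x (Ioo_subset_Ioc_self hx)).hasDerivAt (Icc_mem_nhds hx.1 hx.2)

variable {g : ℝ} {ρ0 p : ℝ → ℝ}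

lemma Hydrostatic.hasDerivAt_left (h : Hydrostatic m l g ρ0 p) {x : ℝ} (hx : x ∈ Ioo (-m) 0) :
    HasDerivAt ρ0 (-g * ρ0 x / p x) x :=
  (h.1 x (Ioo_subset_Ico_self hx)).hasDerivAt (Ico_mem_nhds hx.1 hx.2)

lemma Hydrostatic.hasDerivAt_right (h : Hydrostatic m l g ρ0 p) {x : ℝ} (hx : x ∈ Ioo 0 l) :
    HasDerivAt ρ0 (-g * ρ0 x / p x) x :=
  (h.2 x (Ioo_subset_Ioc_self hx)).hasDerivAt (Ioc_mem_nhds hx.1 hx.2)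

lemma Hydrostatic.tendsto_nhdsGT_bottom (h : Hydrostatic m l g ρ0 p) (hm : 0 < m) :
    Tendsto ρ0 (𝓝[>] (-m)) (𝓝 (ρ0 (-m))) :=
  have hm' : -m < 0 := neg_neg_of_pos hm
  (continuousWithinAt_Ioo_iff_Ioi hm').1
    ((h.1 (-m) (left_mem_Ico.2 hm')).continuousWithinAt.mono Ioo_subset_Ico_self)

lemma pwInt_nonneg (hm : 0 ≤ m) (hl : 0 ≤ l) (hf : ∀ x ∈ Icc (-m) l, 0 ≤ f x) :
    0 ≤ pwInt m l f :=
  add_nonneg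
    (integral_nonneg (neg_nonpos.2 hm) fun x hx => hf x (Icc_subset_Icc_right hl hx))
    (integral_nonneg hl fun x hx => hf x (Icc_subset_Icc_left (neg_nonpos.2 hm) hx))

end Layers

/-- The pointwise value of the first integrand of `energyE`, i.e. the compression and buoyancy
terms, with `d` standing for `s δ0` and `ψ'` for the derivative of `ψ`. -/
def bulkDensity (g k d p ρ φ ψ ψ' : ℝ) : ℝ :=
  (d + p * ρ) * (ψ' + k * φ) ^ 2 - 2 * g * ρ * k * φ * ψ

lemma bulkDensity_eq_add_squares {p : ℝ} (hp : p ≠ 0) (g k d ρ φ ψ ψ' : ℝ) :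
    bulkDensity g k d p ρ φ ψ ψ' =
      g * (-g * ρ / p * ψ ^ 2 + ρ * (2 * ψ * ψ')) +
        (d * (ψ' + k * φ) ^ 2 + p * ρ * (ψ' + k * φ - g * ψ / p) ^ 2) := by
  unfold bulkDensity
  field_simp
  ring

lemma le_bulkDensity {d p ρ : ℝ} (hd : 0 ≤ d) (hp : 0 < p) (hρ : 0 ≤ ρ) (g k φ ψ ψ' : ℝ) :
    g * (-g * ρ / p * ψ ^ 2 + ρ * (2 * ψ * ψ')) ≤ bulkDensity g k d p ρ φ ψ ψ' := by
  rw [bulkDensity_eq_add_squares hp.ne']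
  exact le_add_of_nonneg_right (by positivity)

section OneLayer

variable {a b g : ℝ} {d p ρ φ ψ ψd : ℝ → ℝ}

lemma hasDerivAt_mul_density_mul_sq {x : ℝ} (hρ : HasDerivAt ρ (-g * ρ x / p x) x)
    (hψ : HasDerivAt ψ (ψd x) x) :
    HasDerivAt (fun y => g * (ρ y * ψ y ^ 2))
      (g * (-g * ρ x / p x * ψ x ^ 2 + ρ x * (2 * ψ x * ψd x))) x := by
  simpa using (hρ.mul (hψ.pow 2)).const_mul g

lemma extendsContinuously_bulkDensity (g k : ℝ) (hd : ExtendsContinuously a b d)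
    (hp : ExtendsContinuously a b p) (hρ : ExtendsContinuously a b ρ)
    (hφ : ContinuousOn φ (Icc a b)) (hψ : ContinuousOn ψ (Icc a b))
    (hψd : ExtendsContinuously a b ψd) :
    ExtendsContinuously a b
      (fun x => bulkDensity g k (d x) (p x) (ρ x) (φ x) (ψ x) (ψd x)) := by
  obtain ⟨D, hD, hdD⟩ := hd
  obtain ⟨P, hP, hpP⟩ := hp
  obtain ⟨R, hR, hρR⟩ := hρ
  obtain ⟨Ψ, hΨ, hψdΨ⟩ := hψd
  refine ⟨fun x => bulkDensity g k (D x) (P x) (R x) (φ x) (ψ x) (Ψ x), ?_, fun x hx => ?_⟩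
  · unfold bulkDensity
    fun_prop
  · simp only [hdD hx, hpP hx, hρR hx, hψdΨ hx]

lemma sub_le_integral_bulkDensity {k ρa ρb : ℝ} (hab : a < b)
    (hd : ∀ x ∈ Ioo a b, 0 ≤ d x) (hp : ∀ x ∈ Ioo a b, 0 < p x) (hρ : ∀ x ∈ Ioo a b, 0 ≤ ρ x)
    (hρd : ∀ x ∈ Ioo a b, HasDerivAt ρ (-g * ρ x / p x) x)
    (hψd : ∀ x ∈ Ioo a b, HasDerivAt ψ (ψd x) x)
    (hρa : Tendsto ρ (𝓝[>] a) (𝓝 ρa)) (hρb : Tendsto ρ (𝓝[<] b) (𝓝 ρb))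
    (hψ : ContinuousOn ψ (Icc a b))
    (hint : IntervalIntegrable
      (fun x => bulkDensity g k (d x) (p x) (ρ x) (φ x) (ψ x) (ψd x)) volume a b) :
    g * (ρb * ψ b ^ 2) - g * (ρa * ψ a ^ 2) ≤
      ∫ x in a..b, bulkDensity g k (d x) (p x) (ρ x) (φ x) (ψ x) (ψd x) :=
  sub_le_integral_of_hasDerivAt_le_of_tendsto hab
    (fun x hx => hasDerivAt_mul_density_mul_sq (hρd x hx) (hψd x hx))
    (fun x hx => le_bulkDensity (hd x hx) (hp x hx) (hρ x hx) g k (φ x) (ψ x) (ψd x)) hint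
    ((hρa.mul ((tendsto_nhdsGT_of_continuousOn_Icc hab hψ).pow 2)).const_mul g)
    ((hρb.mul ((tendsto_nhdsLT_of_continuousOn_Icc hab hψ).pow 2)).const_mul g)

end OneLayer

section TwoLayers

variable {m l g σ k s ρ0minus : ℝ} {ρ0 p ε0 δ0 φ ψ φd ψd : ℝ → ℝ}

lemma neg_jump_mul_sq_le_pwInt_bulkDensity (hm : 0 < m) (hl : 0 < l) {d : ℝ → ℝ}
    (hρ : Profile m l ρ0) (hp : Profile m l p)
    (hd_left : ExtendsContinuously (-m) 0 d) (hd_right : ExtendsContinuously 0 l d)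
    (hρ_nonneg : ∀ x ∈ Icc (-m) l, 0 ≤ ρ0 x) (hp_pos : ∀ x ∈ Icc (-m) l, 0 < p x)
    (hd_nonneg : ∀ x ∈ Icc (-m) l, 0 ≤ d x)
    (hhydro : Hydrostatic m l g ρ0 p) (hρm : Tendsto ρ0 (𝓝[<] 0) (𝓝 ρ0minus))
    (hφ : ContinuousOn φ (Icc (-m) l)) (hψ : PiecewiseC1 m l ψ ψd)
    (hψ_bot : ψ (-m) = 0) (hψ_top : ψ l = 0) :
    -(g * (ρ0 0 - ρ0minus)) * ψ 0 ^ 2 ≤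
      pwInt m l (fun x => bulkDensity g k (d x) (p x) (ρ0 x) (φ x) (ψ x) (ψd x)) := by
  have h_bot_neg : -m < 0 := neg_neg_of_pos hm
  have lower : Icc (-m) 0 ⊆ Icc (-m) l := Icc_subset_Icc_right hl.le
  have upper : Icc 0 l ⊆ Icc (-m) l := Icc_subset_Icc_left h_bot_neg.le
  have lower_interior : Ioo (-m) 0 ⊆ Icc (-m) l := Ioo_subset_Icc_self.trans lower
  have upper_interior : Ioo 0 l ⊆ Icc (-m) l := Ioo_subset_Icc_self.trans upper
  have hψd : PiecewiseCont m l ψd := hψ.2.2.2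
  have lower_extends := extendsContinuously_bulkDensity g k hd_left
    hp.extendsContinuously_left hρ.extendsContinuously_left (hφ.mono lower) (hψ.1.mono lower)
    hψd.extendsContinuously_left
  have lower_bound := sub_le_integral_bulkDensity (k := k) (φ := φ) h_bot_neg
    (fun x hx => hd_nonneg x (lower_interior hx)) (fun x hx => hp_pos x (lower_interior hx))
    (fun x hx => hρ_nonneg x (lower_interior hx)) (fun _ => hhydro.hasDerivAt_left)
    (fun _ => hψ.hasDerivAt_left) (hhydro.tendsto_nhdsGT_bottom hm) hρm (hψ.1.mono lower)
    (lower_extends.intervalIntegrable h_bot_neg.le)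
  have upper_extends := extendsContinuously_bulkDensity g k hd_right
    hp.extendsContinuously_right hρ.extendsContinuously_right (hφ.mono upper) (hψ.1.mono upper)
    hψd.extendsContinuously_right
  have upper_bound := sub_le_integral_bulkDensity (k := k) (φ := φ) hl
    (fun x hx => hd_nonneg x (upper_interior hx)) (fun x hx => hp_pos x (upper_interior hx))
    (fun x hx => hρ_nonneg x (upper_interior hx)) (fun _ => hhydro.hasDerivAt_right)
    (fun _ => hψ.hasDerivAt_right) (tendsto_nhdsGT_of_continuousOn_Icc hl hρ.2)
    (tendsto_nhdsLT_of_continuousOn_Icc hl hρ.2) (hψ.1.mono upper)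
    (upper_extends.intervalIntegrable hl.le)
  calc -(g * (ρ0 0 - ρ0minus)) * ψ 0 ^ 2
      = (g * (ρ0minus * ψ 0 ^ 2) - g * (ρ0 (-m) * ψ (-m) ^ 2)) +
          (g * (ρ0 l * ψ l ^ 2) - g * (ρ0 0 * ψ 0 ^ 2)) := by rw [hψ_bot, hψ_top]; ring
    _ ≤ _ := add_le_add lower_bound upper_bound

lemma surface_tension_sub_jump_mul_sq_le_energyE (hm : 0 < m) (hl : 0 < l) (hs : 0 ≤ s)
    (hρ : Profile m l ρ0) (hp : Profile m l p) (hδ : Profile m l δ0)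
    (hρ_nonneg : ∀ x ∈ Icc (-m) l, 0 ≤ ρ0 x) (hp_pos : ∀ x ∈ Icc (-m) l, 0 < p x)
    (hε_nonneg : ∀ x ∈ Icc (-m) l, 0 ≤ ε0 x) (hδ_nonneg : ∀ x ∈ Icc (-m) l, 0 ≤ δ0 x)
    (hhydro : Hydrostatic m l g ρ0 p) (hρm : Tendsto ρ0 (𝓝[<] 0) (𝓝 ρ0minus))
    (hφ : ContinuousOn φ (Icc (-m) l)) (hψ : PiecewiseC1 m l ψ ψd)
    (hψ_bot : ψ (-m) = 0) (hψ_top : ψ l = 0) :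
    1 / 2 * (σ * k ^ 2 - g * (ρ0 0 - ρ0minus)) * ψ 0 ^ 2 ≤
      energyE m l g σ k ρ0 p ε0 δ0 φ ψ φd ψd s := by
  have bulk := neg_jump_mul_sq_le_pwInt_bulkDensity (k := k) hm hl hρ hp
    (hδ.extendsContinuously_left.const_mul s) (hδ.extendsContinuously_right.const_mul s)
    hρ_nonneg hp_pos (fun x hx => mul_nonneg hs (hδ_nonneg x hx)) hhydro hρm hφ hψ hψ_bot hψ_top
  have shear : 0 ≤ pwInt m l (fun x => ε0 x * ((φd x - k * ψ x) ^ 2 + (ψd x - k * φ x) ^ 2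
      + (1 / 3) * (ψd x + k * φ x) ^ 2)) :=
    pwInt_nonneg hm.le hl.le fun x hx => mul_nonneg (hε_nonneg x hx) (by positivity)
  have scaled_shear := mul_nonneg (div_nonneg hs zero_le_two) shear
  unfold bulkDensity at bulk
  unfold energyE
  linarith

theorem negative_energy_interface_displacement_general (hm : 0 < m) (hl : 0 < l) (hs : 0 ≤ s)
    (hρ : Profile m l ρ0) (hp : Profile m l p) (_hε : Profile m l ε0) (hδ : Profile m l δ0)
    (hρ_nonneg : ∀ x ∈ Icc (-m) l, 0 ≤ ρ0 x) (hp_pos : ∀ x ∈ Icc (-m) l, 0 < p x)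
    (hε_nonneg : ∀ x ∈ Icc (-m) l, 0 ≤ ε0 x) (hδ_nonneg : ∀ x ∈ Icc (-m) l, 0 ≤ δ0 x)
    (hhydro : Hydrostatic m l g ρ0 p) (hρm : Tendsto ρ0 (𝓝[<] 0) (𝓝 ρ0minus))
    (hφ : PiecewiseC1 m l φ φd) (hψ : PiecewiseC1 m l ψ ψd)
    (hψ_bot : ψ (-m) = 0) (hψ_top : ψ l = 0)
    (hE : energyE m l g σ k ρ0 p ε0 δ0 φ ψ φd ψd s < 0) :
    ψ 0 ≠ 0 ∧ σ * k ^ 2 < g * (ρ0 0 - ρ0minus) := by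
  have key : 1 / 2 * (σ * k ^ 2 - g * (ρ0 0 - ρ0minus)) * ψ 0 ^ 2 < 0 :=
    (surface_tension_sub_jump_mul_sq_le_energyE hm hl hs hρ hp hδ hρ_nonneg hp_pos hε_nonneg
      hδ_nonneg hhydro hρm hφ.1 hψ hψ_bot hψ_top).trans_lt hE
  refine ⟨fun h => by simp [h] at key, ?_⟩
  have coeff_neg := neg_of_mul_neg_left key (sq_nonneg (ψ 0))
  linarith

end TwoLayers

/-- If the energy of an admissible pair is negative then `ψ(0) ≠ 0` and
`σ k² < g (ρ0⁺ - ρ0⁻)`, where `ρ0⁺ = ρ0 0` and `ρ0⁻` is the left limit of `ρ0` at `0`. -/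
theorem negative_energy_interface_displacement (m l g σ k s : ℝ)
    (ρ0 p ε0 δ0 φ ψ φd ψd : ℝ → ℝ) (ρ0minus : ℝ)
    (hm : 0 < m) (hl : 0 < l) (hg : 0 < g) (hσ : 0 ≤ σ) (hk : 0 < k) (hs : 0 < s)
    (hprof : ProfilesHyp m l ρ0 p ε0 δ0)
    (hhydro : Hydrostatic m l g ρ0 p)
    (hρm : Tendsto ρ0 (𝓝[<] 0) (𝓝 ρ0minus))
    (hadm : Admissible m l φ ψ φd ψd)
    (hE : energyE m l g σ k ρ0 p ε0 δ0 φ ψ φd ψd s < 0) :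
    ψ 0 ≠ 0 ∧ σ * k ^ 2 < g * (ρ0 0 - ρ0minus) := by
  obtain ⟨hρ, hp, hε, hδ, hρ_pos, hp_pos, hε_pos, hδ_nonneg⟩ := hprof
  obtain ⟨hφ, hψ, -, -, hψ_bot, hψ_top⟩ := hadm
  exact negative_energy_interface_displacement_general hm hl hs.le hρ hp hε hδ
    (fun x hx => (hρ_pos x hx).le) hp_pos (fun x hx => (hε_pos x hx).le) hδ_nonneg
    hhydro hρm hφ hψ hψ_bot hψ_top hE

end RT
end
end
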